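/- Work in Euclidean space ℝ² and let A = {(0,0), (3,0)} ∪ ([1,2] × {1}) ⊆ ℝ². For t ≥ 0 let f(t) be the one-dimensional Lebesgue measure of the set {x ∈ [0,3] : (x,0) ∈ A + t·B₂²}, where B₂² is the closed Euclidean unit ball. Then f(t) = 2t for all t ∈ [0,1), while f(1) = 3; in particular f is not continuous at t = 1. -/

import Mathlib

open MeasureTheory Set Pointwise

theorem mem_add_smul_unitClosedBall {E : Type*} [NormedAddCommGroup E] [NormedSpace ℝ E]
    {A : Set E} {t : ℝ} (ht : 0 ≤ t) {p : E} :
    p ∈ A + t • Metric.closedBall (0 : E) 1 ↔ ∃ a ∈ A, dist p a ≤ t := by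
  rw [smul_unitClosedBall_of_nonneg ht, Set.mem_add]
  constructor
  · rintro ⟨a, ha, b, hb, rfl⟩
    exact ⟨a, ha, by simpa using hb⟩
  · rintro ⟨a, ha, h⟩
    exact ⟨a, ha, p - a, by simpa [dist_eq_norm] using h, by simp⟩

theorem EuclideanSpace.dist_vec_two_le_iff {x y u v t : ℝ} (ht : 0 ≤ t) :
    dist ((WithLp.equiv 2 (Fin 2 → ℝ)).symm ![x, y]) ((WithLp.equiv 2 (Fin 2 → ℝ)).symm ![u, v]) ≤ t
      ↔ (x - u) ^ 2 + (y - v) ^ 2 ≤ t ^ 2 := by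
  rw [EuclideanSpace.dist_eq, Real.sqrt_le_left ht]
  simp [Real.dist_eq]

/-- The one-dimensional measure of the intersection of the parallel set of
`A = {(0,0),(3,0)} ∪ [1,2]×{1}` with the segment `[0,3]×{0}` is `2t` for
`t ∈ [0,1)` but jumps to `3` at `t = 1`; in particular it is discontinuous. -/
theorem parallel_set_section_discontinuous
    (pt : ℝ → ℝ → EuclideanSpace ℝ (Fin 2))
    (hpt : ∀ x y, pt x y = (WithLp.equiv 2 (Fin 2 → ℝ)).symm ![x, y])
    (A : Set (EuclideanSpace ℝ (Fin 2)))
    (hA : A = {pt 0 0, pt 3 0} ∪ (fun x => pt x 1) '' Icc (1 : ℝ) 2)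
    (f : ℝ → ℝ)
    (hf : ∀ t, f t = (volume {x ∈ Icc (0 : ℝ) 3 |
      pt x 0 ∈ A + t • Metric.closedBall (0 : EuclideanSpace ℝ (Fin 2)) 1}).toReal) :
    (∀ t ∈ Ico (0 : ℝ) 1, f t = 2 * t) ∧ f 1 = 3 ∧ ¬ ContinuousAt f 1 := by
  have mem_iff {t : ℝ} (ht : 0 ≤ t) (x : ℝ) :
      pt x 0 ∈ A + t • Metric.closedBall (0 : EuclideanSpace ℝ (Fin 2)) 1 ↔
        x ^ 2 ≤ t ^ 2 ∨ (x - 3) ^ 2 ≤ t ^ 2 ∨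
          ∃ u ∈ Icc (1 : ℝ) 2, (x - u) ^ 2 + 1 ≤ t ^ 2 := by
    rw [mem_add_smul_unitClosedBall ht, hA]
    simp only [hpt, mem_union, mem_insert_iff, mem_singleton_iff, mem_image, or_and_right,
      exists_or, exists_eq_left, exists_exists_and_eq_and,
      EuclideanSpace.dist_vec_two_le_iff ht]
    norm_num [or_assoc]
  have eq_two_mul : ∀ t ∈ Ico (0 : ℝ) 1, f t = 2 * t := by
    rintro t ⟨ht0, ht1⟩
    have hset : {x ∈ Icc (0 : ℝ) 3 |
        pt x 0 ∈ A + t • Metric.closedBall (0 : EuclideanSpace ℝ (Fin 2)) 1} =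
        Icc 0 t ∪ Icc (3 - t) 3 := by
      ext x
      simp only [mem_ofPred_eq, mem_iff ht0, mem_union, mem_Icc]
      constructor
      · rintro ⟨⟨h0, h3⟩, h | h | ⟨u, -, h⟩⟩
        · exact Or.inl ⟨h0, abs_le_of_sq_le_sq' h ht0 |>.2⟩
        · exact Or.inr ⟨by linarith [(abs_le_of_sq_le_sq' h ht0).1], h3⟩
        · nlinarith [sq_nonneg (x - u)]
      · rintro (⟨h0, h⟩ | ⟨h, h3⟩)
        · exact ⟨⟨h0, by linarith⟩, Or.inl (by nlinarith)⟩
        · exact ⟨⟨by linarith, h3⟩, Or.inr (Or.inl (by nlinarith))⟩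
    have hdisj : Disjoint (Icc 0 t) (Icc (3 - t) 3) :=
      Set.disjoint_left.2 fun x hx hx' => by linarith [hx.2, hx'.1]
    rw [hf, hset, measure_union hdisj measurableSet_Icc, Real.volume_Icc, Real.volume_Icc,
      ← ENNReal.ofReal_add (by linarith) (by linarith), ENNReal.toReal_ofReal (by linarith)]
    ring
  have eq_three : f 1 = 3 := by
    have hset : {x ∈ Icc (0 : ℝ) 3 |
        pt x 0 ∈ A + (1 : ℝ) • Metric.closedBall (0 : EuclideanSpace ℝ (Fin 2)) 1} =
        Icc 0 3 := by
      refine Set.sep_eq_self_iff_mem_true.2 fun x ⟨h0, h3⟩ => (mem_iff zero_le_one x).2 ?_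
      rcases le_total x 1 with h1 | h1
      · exact Or.inl (by nlinarith)
      rcases le_total x 2 with h2 | h2
      · exact Or.inr (Or.inr ⟨x, ⟨h1, h2⟩, by simp⟩)
      · exact Or.inr (Or.inl (by nlinarith))
    rw [hf, hset, Real.volume_Icc, ENNReal.toReal_ofReal (by norm_num)]
    norm_num
  refine ⟨eq_two_mul, eq_three, fun hcont => ?_⟩
  have hleft : Filter.Tendsto f (nhdsWithin 1 (Iio 1)) (nhds 3) :=
    eq_three ▸ hcont.tendsto.mono_left nhdsWithin_le_nhds
  have hle : ∀ᶠ t in nhdsWithin (1 : ℝ) (Iio 1), f t ≤ 2 := by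
    filter_upwards [Ico_mem_nhdsLT (zero_lt_one' ℝ)] with t ht
    rw [eq_two_mul t ht]
    linarith [ht.2]
  linarith [le_of_tendsto hleft hle]
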